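/- Let F be a field of characteristic different from 2, let u, ϖ ∈ F× with ϖ a non-square, let E = F(√ϖ), and suppose u√ϖ is not a square in E; let K = E(β) with β² = u√ϖ (so K = E(⁴√ϖ·√u)). Then the quadratic form q′ on K, viewed as a 4-dimensional F-vector space, defined by q′(k) = ½·tr_{E/F}(N_{K/E}(k)), is equivalent over F to the diagonal quadratic form ⟨1, ϖ, 1, −1⟩; in particular the determinant of its Gram matrix is −ϖ times a square in F×. -/

import Mathlib

/-!
As `N(x + yβ) = x² - u√ϖ y²`, the norm form of `K/E` is `⟨1⟩ ⊥ ⟨-u√ϖ⟩` over `E`. Transfer along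
`½·tr : E → F`, which reads off the coordinate at `1` with respect to `1, √ϖ`, turns `⟨1⟩` into
`⟨1, ϖ⟩` and `⟨-u√ϖ⟩` into `-2uϖzw`, a hyperbolic plane and therefore `⟨1, -1⟩`. The determinant
of a Gram matrix changes by the square of a unit under isometry and change of basis.
-/

open QuadraticMap hiding sq
open scoped QuadraticAlgebra

section QuadraticAlgebra

theorem algebraNorm_quadraticAlgebra {R : Type*} [CommRing R] {a b : R}
    (z : QuadraticAlgebra R a b) : Algebra.norm R z = z.norm :=
  z.det_toLinearMap_eq_norm

theorem algebraTrace_quadraticAlgebra {R : Type*} [CommRing R] {a b : R}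
    (z : QuadraticAlgebra R a b) : Algebra.trace R _ z = z.trace := by
  have leftMulMatrix_eq : Algebra.leftMulMatrix (QuadraticAlgebra.basis a b) z =
      !![z.re, a * z.im; z.im, z.re + b * z.im] := by
    ext i j
    rw [Algebra.leftMulMatrix_eq_repr_mul, QuadraticAlgebra.basis_repr_apply]
    fin_cases i <;> fin_cases j <;> simp [QuadraticAlgebra.basis]
  rw [Algebra.trace_eq_matrix_trace (QuadraticAlgebra.basis a b), leftMulMatrix_eq,
    Matrix.trace_fin_two_of, QuadraticAlgebra.trace_def]
  ring

theorem exists_quadraticAlgebra_algEquiv {A L : Type*} [Field A] [CommRing L] [Nontrivial L]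
    [Algebra A L] {d : A} (hd : ¬ ∃ a : A, a ^ 2 = d) {s : L} (hs : s ^ 2 = algebraMap A L d)
    (hgen : ∀ x : L, ∃ a b : A, x = algebraMap A L a + algebraMap A L b * s) :
    ∃ e : QuadraticAlgebra A d 0 ≃ₐ[A] L, e ω = s := by
  have : Fact (∀ r : A, r ^ 2 ≠ d + 0 * r) := ⟨fun r hr => hd ⟨r, by simpa using hr⟩⟩
  have s_mul_s : s * s = d • (1 : L) + (0 : A) • s := by
    rw [← sq, hs, zero_smul, add_zero, Algebra.algebraMap_eq_smul_one]
  let f : QuadraticAlgebra A d 0 →ₐ[A] L := QuadraticAlgebra.lift ⟨s, s_mul_s⟩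
  have f_surjective : Function.Surjective f := fun x => by
    obtain ⟨a, b, rfl⟩ := hgen x
    exact ⟨⟨a, b⟩, by simp [f, Algebra.smul_def]⟩
  refine ⟨.ofBijective f ⟨f.toRingHom.injective, f_surjective⟩, ?_⟩
  change f ω = s
  simp [f]

end QuadraticAlgebra

section QuadraticForm

variable {R : Type*} [CommRing R]

theorem prod_weightedSumSquares_equivalent {m n : ℕ} (w : Fin m → R) (w' : Fin n → R) :
    ((weightedSumSquares R w).prod (weightedSumSquares R w')).Equivalent
      (weightedSumSquares R (Fin.append w w')) :=
  ⟨{ Fin.appendEquiv m n with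
      map_add' x y := by ext i; refine Fin.addCases ?_ ?_ i <;> simp [Fin.appendEquiv]
      map_smul' c x := by ext i; refine Fin.addCases ?_ ?_ i <;> simp [Fin.appendEquiv]
      map_app' x := by simp [Fin.appendEquiv, Fin.sum_univ_add] }⟩

variable [Invertible (2 : R)]

-- `c z w = X² - Y²` for `X + Y = z` and `X - Y = c w`.
theorem smul_linMulLin_fst_snd_equivalent {c : R} (hc : IsUnit c) :
    (c • linMulLin (.fst R R R) (.snd R R R)).Equivalent
      (weightedSumSquares R ![(1 : R), -1]) := by
  obtain ⟨c, rfl⟩ := hc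
  have two_half : (2 : R) * ⅟2 = 1 := mul_invOf_self 2
  have c_inv : (c : R) * ↑c⁻¹ = 1 := c.mul_inv
  exact ⟨{
    toFun p := ![⅟2 * (p.1 + c * p.2), ⅟2 * (p.1 - c * p.2)]
    invFun v := (v 0 + v 1, c⁻¹ * (v 0 - v 1))
    map_add' p q := by ext i; fin_cases i <;> simp <;> ring
    map_smul' r p := by ext i; fin_cases i <;> simp <;> ring
    left_inv p := by ext <;> simp <;> grind
    right_inv v := by ext i; fin_cases i <;> simp <;> grind
    map_app' p := by simp; grind }⟩

variable {ι M N : Type*} [Fintype ι] [DecidableEq ι] [AddCommGroup M] [Module R M]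
  [AddCommGroup N] [Module R N]

theorem toMatrix_apply_eq_invOf_two_mul_polar (b : Module.Basis ι R M) (Q : QuadraticForm R M)
    (i j : ι) : Q.toMatrix b i j = ⅟2 * polar Q (b i) (b j) := by
  rw [QuadraticForm.toMatrix, LinearMap.toMatrix₂_apply, associated_apply, Module.End.smul_def,
    half_moduleEnd_apply_eq_half_smul, smul_eq_mul, polar]

theorem discr_weightedSumSquares (w : ι → R) :
    QuadraticForm.discr (Pi.basisFun R ι) (weightedSumSquares R w) = ∏ i, w i := by
  have toMatrix_eq :
      QuadraticForm.toMatrix (Pi.basisFun R ι) (weightedSumSquares R w) = .diagonal w := by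
    ext i j
    have polar_single : polar (weightedSumSquares R w) (Pi.single i 1) (Pi.single j 1) =
        2 * Matrix.diagonal w i j := by
      rcases eq_or_ne i j with rfl | hij
      · simp [weightedSumSquares_apply, Pi.single_apply, nsmul_eq_mul]
      · simp [polar, weightedSumSquares_apply, Pi.single_apply, mul_add, Finset.sum_add_distrib,
          hij, hij.symm]
    rw [toMatrix_apply_eq_invOf_two_mul_polar, Pi.basisFun_apply, Pi.basisFun_apply, polar_single,
      invOf_mul_cancel_left]
  rw [QuadraticForm.discr, toMatrix_eq, Matrix.det_diagonal]

theorem exists_discr_eq_mul_sq_of_equivalent {Q : QuadraticForm R M} {Q' : QuadraticForm R N}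
    (h : Q.Equivalent Q') (b : Module.Basis ι R M) (b' : Module.Basis ι R N) :
    ∃ c : R, IsUnit c ∧ Q.discr b = Q'.discr b' * c ^ 2 := by
  obtain ⟨f⟩ := h
  refine ⟨_, f.toLinearEquiv.isUnit_det b b', ?_⟩
  have Q_eq_comp : Q'.comp (f.toLinearEquiv : M →ₗ[R] N) = Q := by ext x; exact f.map_app x
  have := QuadraticForm.discr_comp (b := b) b' Q' (f.toLinearEquiv : M →ₗ[R] N)
  rw [← sq, mul_comm, Q_eq_comp] at this
  exact this

end QuadraticForm

section Transfer

variable {F E M N : Type*} [CommRing F] [CommRing E] [Algebra F E] [AddCommGroup M]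
  [AddCommGroup N] [Module E M] [Module E N] [Module F M] [Module F N] [IsScalarTower F E M]
  [IsScalarTower F E N]

theorem compQuadraticMap'_equivalent (φ : E →ₗ[F] F) {Q : QuadraticForm E M}
    {Q' : QuadraticForm E N} (h : Q.Equivalent Q') :
    (φ.compQuadraticMap' Q).Equivalent (φ.compQuadraticMap' Q') := by
  obtain ⟨f⟩ := h
  exact ⟨{ f.toLinearEquiv.restrictScalars F with map_app' x := congrArg φ (f.map_app x) }⟩

theorem compQuadraticMap'_prod (φ : E →ₗ[F] F) (Q : QuadraticForm E M) (Q' : QuadraticForm E N) :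
    φ.compQuadraticMap' (Q.prod Q') = (φ.compQuadraticMap' Q).prod (φ.compQuadraticMap' Q') := by
  ext
  simp

end Transfer

section QuadraticExtension

variable {R A : Type*} [CommRing R] [CommRing A] [Algebra R A] {d : R}
  (e : QuadraticAlgebra R d 0 ≃ₐ[R] A)

/-- The coordinates of `A` with respect to the basis `1, √d`, where `√d` is the image of `ω` under
the identification `e` of `A` with `R[√d]`. -/
def quadraticCoords : A ≃ₗ[R] R × R :=
  e.symm.toLinearEquiv ≪≫ₗ QuadraticAlgebra.linearEquivTuple d 0 ≪≫ₗ LinearEquiv.finTwoArrow R R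

theorem quadraticCoords_apply (z : QuadraticAlgebra R d 0) :
    quadraticCoords e (e z) = (z.re, z.im) := by
  simp [quadraticCoords]

/-- The norm form of `A = R[√d]` as a quadratic form over `R`. It is given as `⟨1, -d⟩` in the
coordinates of `e`; `normForm_apply` identifies it with `Algebra.norm`. -/
def normForm : QuadraticForm R A :=
  (QuadraticMap.sq.prod (-d • QuadraticMap.sq)).comp (quadraticCoords e).toLinearMap

theorem normForm_apply (x : A) : normForm e x = Algebra.norm R x := by
  obtain ⟨z, rfl⟩ := e.surjective x
  rw [Algebra.norm_eq_of_algEquiv, algebraNorm_quadraticAlgebra]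
  simp only [normForm, comp_apply, LinearEquiv.coe_coe, quadraticCoords_apply,
    QuadraticMap.prod_apply, sq_apply, smul_apply, smul_eq_mul, QuadraticAlgebra.norm_def]
  ring

theorem normForm_equivalent_prod :
    (normForm e).Equivalent (QuadraticMap.sq.prod (-d • QuadraticMap.sq)) :=
  .symm ⟨isometryEquivOfCompLinearEquiv _ (quadraticCoords e)⟩

variable [Invertible (2 : R)]

variable (R A) in
/-- The functional `½·tr` along which quadratic forms over `A` are transferred to `R`. On `R[√d]` it
reads off the coordinate at `1`. -/
noncomputable def halfTrace : A →ₗ[R] R := ⅟(2 : R) • Algebra.trace R A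

theorem halfTrace_algEquiv_apply (z : QuadraticAlgebra R d 0) : halfTrace R A (e z) = z.re := by
  simp [halfTrace, Algebra.trace_eq_of_algEquiv, algebraTrace_quadraticAlgebra,
    QuadraticAlgebra.trace_def]

include e in
theorem halfTrace_sq_equivalent :
    ((halfTrace R A).compQuadraticMap' (QuadraticMap.sq (R := A))).Equivalent
      (weightedSumSquares R ![1, d]) :=
  ⟨{ e.symm.toLinearEquiv.trans (QuadraticAlgebra.linearEquivTuple d 0) with
      map_app' x := by
        obtain ⟨x, rfl⟩ := e.surjective x
        simp [← map_mul, halfTrace_algEquiv_apply, mul_assoc] }⟩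

theorem halfTrace_smul_sq_equivalent (c : R) :
    ((halfTrace R A).compQuadraticMap'
        ((algebraMap R A c * e ω) • QuadraticMap.sq (R := A))).Equivalent
      ((2 * c * d) • linMulLin (.fst R R R) (.snd R R R)) :=
  ⟨{ quadraticCoords e with
      map_app' x := by
        obtain ⟨x, rfl⟩ := e.surjective x
        have trace_eq : halfTrace R A (algebraMap R A c * e ω * (e x * e x)) =
            2 * c * d * (x.re * x.im) := by
          rw [← e.commutes, ← map_mul, ← map_mul, ← map_mul, halfTrace_algEquiv_apply]
          simp only [QuadraticAlgebra.re_mul, QuadraticAlgebra.im_mul,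
            QuadraticAlgebra.algebraMap_re, QuadraticAlgebra.algebraMap_im,
            QuadraticAlgebra.omega_re, QuadraticAlgebra.omega_im]
          ring
        simp [quadraticCoords_apply, trace_eq] }⟩

end QuadraticExtension

theorem halfTrace_normForm_equivalent {F E K : Type*} [CommRing F] [Invertible (2 : F)]
    [CommRing E] [CommRing K] [Algebra F E] [Algebra E K] [Algebra F K] [IsScalarTower F E K]
    {u ϖ : F} (hu : IsUnit u) (hϖ : IsUnit ϖ) (eE : QuadraticAlgebra F ϖ 0 ≃ₐ[F] E)
    (eK : QuadraticAlgebra E (algebraMap F E u * eE ω) 0 ≃ₐ[E] K) :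
    ((halfTrace F E).compQuadraticMap' (normForm eK)).Equivalent
      (weightedSumSquares F ![1, ϖ, 1, -1]) := by
  have hyperbolic : ((halfTrace F E).compQuadraticMap'
      (-(algebraMap F E u * eE ω) • QuadraticMap.sq (R := E))).Equivalent
        (weightedSumSquares F ![(1 : F), -1]) := by
    rw [← neg_mul, ← map_neg]
    exact (halfTrace_smul_sq_equivalent eE (-u)).trans
      (smul_linMulLin_fst_snd_equivalent (((isUnit_of_invertible 2).mul hu.neg).mul hϖ))
  have split := compQuadraticMap'_equivalent (halfTrace F E) (normForm_equivalent_prod eK)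
  rw [compQuadraticMap'_prod] at split
  have append_eq : Fin.append ![1, ϖ] ![1, -1] = ![1, ϖ, 1, -1] := by
    ext i
    fin_cases i <;> rfl
  rw [← append_eq]
  exact split.trans (((halfTrace_sq_equivalent eE).prod hyperbolic).trans
    (prod_weightedSumSquares_equivalent _ _))

theorem stmt5_general {F E K : Type*} [Field F] [CommRing E] [CommRing K]
    [Algebra F E] [Algebra E K] [Algebra F K] [IsScalarTower F E K] (hchar : (2 : F) ≠ 0)
    {u ϖ : F} (hu : u ≠ 0) (hϖ : ϖ ≠ 0) (eE : QuadraticAlgebra F ϖ 0 ≃ₐ[F] E)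
    (eK : QuadraticAlgebra E (algebraMap F E u * eE ω) 0 ≃ₐ[E] K)
    (q : K → F) (hq : ∀ k : K, q k = 1 / 2 * Algebra.trace F E (Algebra.norm E k)) :
    (∃ ℓ : (Fin 4 → F) ≃ₗ[F] K, ∀ v : Fin 4 → F,
        q (ℓ v) = 1 * v 0 ^ 2 + ϖ * v 1 ^ 2 + 1 * v 2 ^ 2 + (-1) * v 3 ^ 2) ∧
    (∀ b : Module.Basis (Fin 4) F K, ∃ c : F, c ≠ 0 ∧
        (Matrix.of fun i j : Fin 4 => (q (b i + b j) - q (b i) - q (b j)) / 2).det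
          = -ϖ * c ^ 2) := by
  have := invertibleOfNonzero hchar
  let Q : QuadraticForm F K := (halfTrace F E).compQuadraticMap' (normForm eK)
  have Q_eq : q = Q := by
    ext k
    simp [Q, hq, halfTrace, normForm_apply]
  have Q_equiv : Q.Equivalent (weightedSumSquares F ![1, ϖ, 1, -1]) :=
    halfTrace_normForm_equivalent hu.isUnit hϖ.isUnit eE eK
  refine ⟨?_, fun b => ?_⟩
  · obtain ⟨f⟩ := Q_equiv.symm
    refine ⟨f.toLinearEquiv, fun v => ?_⟩
    rw [Q_eq]
    refine (f.map_app v).trans ?_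
    simp [Fin.sum_univ_four, sq]
  · obtain ⟨c, hc, hdiscr⟩ := exists_discr_eq_mul_sq_of_equivalent Q_equiv b (Pi.basisFun F _)
    refine ⟨c, hc.ne_zero, ?_⟩
    calc (Matrix.of fun i j : Fin 4 => (q (b i + b j) - q (b i) - q (b j)) / 2).det
        = Q.discr b := by
          refine congrArg Matrix.det (Matrix.ext fun i j => ?_)
          rw [toMatrix_apply_eq_invOf_two_mul_polar, invOf_eq_inv, inv_mul_eq_div, polar, Q_eq,
            Matrix.of_apply]
      _ = -ϖ * c ^ 2 := by
          rw [hdiscr, discr_weightedSumSquares, Fin.prod_univ_four]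
          simp

/-- for `E = F(√ϖ)` (`ϖ` a non-square, char F ≠ 2), `u ∈ F^×`, and
`K = E(β)` with `β² = u√ϖ` (where `u√ϖ` is not a square in `E`), the quadratic
form `q′(k) = ½·tr_{E/F}(N_{K/E}(k))` on the 4-dimensional `F`-vector space `K`
is equivalent to `⟨1, ϖ, 1, −1⟩`; in particular its Gram determinant with
respect to any `F`-basis is `−ϖ` times a nonzero square. -/
theorem stmt5 {F E K : Type*} [Field F] [Field E] [Field K]
    [Algebra F E] [Algebra E K] [Algebra F K] [IsScalarTower F E K]
    [FiniteDimensional F E] [FiniteDimensional E K]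
    (hchar : (2 : F) ≠ 0)
    (u ϖ : F) (hu : u ≠ 0) (hϖ : ¬ ∃ a : F, a ^ 2 = ϖ)
    (sqrtϖ : E) (hsqrtϖ : sqrtϖ ^ 2 = algebraMap F E ϖ)
    (hEgen : ∀ x : E, ∃ a b : F, x = algebraMap F E a + algebraMap F E b * sqrtϖ)
    (hns : ¬ ∃ y : E, y ^ 2 = algebraMap F E u * sqrtϖ)
    (β : K) (hβ : β ^ 2 = algebraMap E K (algebraMap F E u * sqrtϖ))
    (hKgen : ∀ x : K, ∃ a b : E, x = algebraMap E K a + algebraMap E K b * β)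
    (q : K → F)
    (hq : ∀ k : K, q k = 1 / 2 * Algebra.trace F E (Algebra.norm E k)) :
    (∃ ℓ : (Fin 4 → F) ≃ₗ[F] K, ∀ v : Fin 4 → F,
        q (ℓ v) = 1 * v 0 ^ 2 + ϖ * v 1 ^ 2 + 1 * v 2 ^ 2 + (-1) * v 3 ^ 2) ∧
    (∀ b : Module.Basis (Fin 4) F K, ∃ c : F, c ≠ 0 ∧
        (Matrix.of fun i j : Fin 4 => (q (b i + b j) - q (b i) - q (b j)) / 2).det
          = -ϖ * c ^ 2) := by
  obtain ⟨eE, rfl⟩ := exists_quadraticAlgebra_algEquiv hϖ hsqrtϖ hEgen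
  obtain ⟨eK, -⟩ := exists_quadraticAlgebra_algEquiv hns hβ hKgen
  exact stmt5_general hchar hu (fun h => hϖ ⟨0, by simp [h]⟩) eE eK q hq
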